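/- arXiv:1905.00066 — 5 statements merged into one kernel-verified Lean document; each statement's English description precedes it below -/
import Mathlib

section
/- Let m_LS, m_S, β, α, x be real numbers with m_LS > 0, m_S ≥ 0, β ≥ 1, 0 < α ≤ 1, and x ≥ α·m_LS. Then x/2 + (2β−1)·m_LS/2 + (2/3)·m_S ≥ min((α + 2β − 1)/(2β), 2/3) · (β·m_LS + m_S). -/
theorem stmt1 (mLS mS β α x : ℝ) (h1 : 0 < mLS) (h2 : 0 ≤ mS) (h3 : 1 ≤ β)
    (h4 : 0 < α) (h5 : α ≤ 1) (h6 : x ≥ α * mLS) :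
    x / 2 + (2 * β - 1) * mLS / 2 + (2 / 3) * mS ≥
      min ((α + 2 * β - 1) / (2 * β)) (2 / 3) * (β * mLS + mS) := by
  have hβ : 0 < β := by linarith
  have a := mul_le_mul_of_nonneg_right
    (min_le_left ((α + 2 * β - 1) / (2 * β)) (2 / 3)) (mul_pos hβ h1).le
  have b := mul_le_mul_of_nonneg_right
    (min_le_right ((α + 2 * β - 1) / (2 * β)) (2 / 3)) h2
  have c : (α + 2 * β - 1) / (2 * β) * (β * mLS) = (α + 2 * β - 1) * mLS / 2 := by
    field_simp
  rw [c] at a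
  rw [mul_add]
  linarith
end

section
/- Let B be a finite set (of bins), δ a real with 0 < δ < 1, ℓ : B → ℝ a function with 0 ≤ ℓ(b) < 1/2 for all b ∈ B, and k : B → ℕ a function with Σ_{b∈B} k(b) = N. Let m = |{b ∈ B : ℓ(b) ≥ δ}|. Then |{b ∈ B : ℓ(b) + k(b)·(1−δ) ≥ 1}| ≤ (N + m)/2. -/
theorem stmt5 {B : Type*} [Fintype B] [DecidableEq B] (δ : ℝ) (hδ0 : 0 < δ) (hδ1 : δ < 1)
    (ℓ : B → ℝ) (hℓ : ∀ b, 0 ≤ ℓ b ∧ ℓ b < 1 / 2)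
    (k : B → ℕ) (N : ℕ) (hk : ∑ b, k b = N)
    (m : ℕ) (hm : m = (Finset.univ.filter (fun b => δ ≤ ℓ b)).card) :
    ((Finset.univ.filter (fun b => 1 ≤ ℓ b + (k b : ℝ) * (1 - δ))).card : ℝ)
      ≤ ((N : ℝ) + m) / 2 := by
  have key : 2 * (Finset.univ.filter (fun b => 1 ≤ ℓ b + (k b : ℝ) * (1 - δ))).card ≤ N + m := by
    rw [hm, ← hk, Finset.card_filter, Finset.card_filter, Finset.mul_sum,
      ← Finset.sum_add_distrib]
    apply Finset.sum_le_sum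
    intro b _
    have hb := (hℓ b).2
    by_cases hc : 1 ≤ ℓ b + (k b : ℝ) * (1 - δ)
    · rw [if_pos hc]
      rcases h : k b with _ | _ | n
      · rw [h] at hc
        norm_num at hc
        linarith
      · rw [h] at hc
        norm_num at hc
        rw [if_pos (by linarith)]
        omega
      · omega
    · rw [if_neg hc]
      omega
  have key' : (2 : ℝ) * ((Finset.univ.filter
      (fun b => 1 ≤ ℓ b + (k b : ℝ) * (1 - δ))).card : ℝ) ≤ (N : ℝ) + m := by
    exact_mod_cast key
  linarith
end

section
/- Let n be a positive integer, μ > 0 and d ≥ 0 real numbers, and m : {1,…,n} → ℝ a function with m_j ≥ 0 for all j and Σ_{j=1}^{n} m_j ≤ n. Let A ⊆ {1,…,n} be such that for every j ∈ A, μ·(n/j − 1) ≤ m_j/2 + d. Then Σ_{j∈A} 1/j ≤ (1 + 2(d+μ))/(2μ). -/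
theorem stmt6 (n : ℕ) (hn : 1 ≤ n) (μ d : ℝ) (hμ : 0 < μ) (hd : 0 ≤ d)
    (m : ℕ → ℝ) (hm0 : ∀ j ∈ Finset.Icc 1 n, 0 ≤ m j)
    (hmsum : ∑ j ∈ Finset.Icc 1 n, m j ≤ n)
    (A : Finset ℕ) (hA : A ⊆ Finset.Icc 1 n)
    (hineq : ∀ j ∈ A, μ * ((n : ℝ) / j - 1) ≤ m j / 2 + d) :
    ∑ j ∈ A, (1 : ℝ) / j ≤ (1 + 2 * (d + μ)) / (2 * μ) := by
  have hn' : (0 : ℝ) < n := by exact_mod_cast hn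
  have h1 : ∑ j ∈ A, m j ≤ n :=
    (Finset.sum_le_sum_of_subset_of_nonneg hA (fun j hj _ => hm0 j hj)).trans hmsum
  have hc : (A.card : ℝ) ≤ n := by
    have := Finset.card_le_card hA
    rw [Nat.card_Icc] at this
    exact_mod_cast (by omega : A.card ≤ n)
  have h2 : ∑ j ∈ A, (μ * n) * ((1 : ℝ) / j) ≤ ∑ j ∈ A, ((1 / 2) * m j + (d + μ)) := by
    apply Finset.sum_le_sum
    intro j hj
    have h := hineq j hj
    have e : (μ * n) * ((1 : ℝ) / j) = μ * ((n : ℝ) / j - 1) + μ := by ring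
    rw [e]
    linarith
  rw [← Finset.mul_sum, Finset.sum_add_distrib, ← Finset.mul_sum, Finset.sum_const,
    nsmul_eq_mul] at h2
  have h3 : (A.card : ℝ) * (d + μ) ≤ n * (d + μ) :=
    mul_le_mul_of_nonneg_right hc (by linarith)
  rw [le_div_iff₀ (by linarith)]
  refine le_of_mul_le_mul_left ?_ hn'
  linarith
end

section
/- Let n ≥ 1 be a natural number, M = ⌊√n⌋, and let μ > 0 and d ≥ 0 be real numbers. Suppose the set {1,…,M} is partitioned into w parts A_1,…,A_w, and for each t ∈ {1,…,w} there is a function m^t : {1,…,n} → ℝ with m^t_j ≥ 0 for all j, Σ_{j=1}^{n} m^t_j ≤ n, and μ·(n/j − 1) ≤ m^t_j/2 + d for every j ∈ A_t. Then w ≥ μ·ln(n)/(1 + 2(d+μ)). -/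
theorem stmt8 (n : ℕ) (hn : 1 ≤ n) (μ d : ℝ) (hμ : 0 < μ) (hd : 0 ≤ d)
    (w : ℕ) (A : Fin w → Finset ℕ)
    (hdisj : ∀ s t : Fin w, s ≠ t → Disjoint (A s) (A t))
    (hcover : Finset.univ.biUnion A = Finset.Icc 1 (Nat.sqrt n))
    (m : Fin w → ℕ → ℝ)
    (hm0 : ∀ t, ∀ j ∈ Finset.Icc 1 n, 0 ≤ m t j)
    (hmsum : ∀ t, ∑ j ∈ Finset.Icc 1 n, m t j ≤ n)
    (hineq : ∀ t, ∀ j ∈ A t, μ * ((n : ℝ) / j - 1) ≤ m t j / 2 + d) :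
    (w : ℝ) ≥ μ * Real.log n / (1 + 2 * (d + μ)) := by
  have hM1 : 1 ≤ Nat.sqrt n := Nat.le_sqrt.2 (by omega)
  have hMn : Nat.sqrt n ≤ n := Nat.sqrt_le_self n
  have hn0 : (0 : ℝ) < n := by exact_mod_cast hn
  have hw : (1 : ℝ) ≤ w := by
    have h1 : 1 ∈ Finset.univ.biUnion A := by
      rw [hcover]; exact Finset.mem_Icc.2 ⟨le_refl _, hM1⟩
    obtain ⟨t, _, _⟩ := Finset.mem_biUnion.1 h1
    have h2 : 1 ≤ w := by have := t.2; omega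
    exact_mod_cast h2
  have hsub : ∀ t, A t ⊆ Finset.Icc 1 n := by
    intro t j hj
    have h1 : j ∈ Finset.univ.biUnion A := Finset.mem_biUnion.2 ⟨t, Finset.mem_univ _, hj⟩
    rw [hcover, Finset.mem_Icc] at h1
    exact Finset.mem_Icc.2 ⟨h1.1, h1.2.trans hMn⟩
  have hpart : ∀ t, ∑ j ∈ A t, (μ * n * (j : ℝ)⁻¹ - (d + μ)) ≤ (n : ℝ) / 2 := by
    intro t
    calc ∑ j ∈ A t, (μ * n * (j : ℝ)⁻¹ - (d + μ)) ≤ ∑ j ∈ A t, m t j / 2 := by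
          apply Finset.sum_le_sum
          intro j hj
          have := hineq t j hj
          rw [div_eq_mul_inv (n : ℝ)] at this
          linarith
      _ = (∑ j ∈ A t, m t j) / 2 := by rw [Finset.sum_div]
      _ ≤ (∑ j ∈ Finset.Icc 1 n, m t j) / 2 := by
          have := Finset.sum_le_sum_of_subset_of_nonneg (hsub t) (fun j hj _ => hm0 t j hj)
          linarith
      _ ≤ (n : ℝ) / 2 := by linarith [hmsum t]
  have htot : ∑ j ∈ Finset.Icc 1 (Nat.sqrt n), (μ * n * (j : ℝ)⁻¹ - (d + μ)) ≤ w * ((n : ℝ) / 2) := by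
    rw [← hcover, Finset.sum_biUnion (fun s _ t _ hst => hdisj s t hst)]
    calc _ ≤ ∑ _t : Fin w, (n : ℝ) / 2 := Finset.sum_le_sum (fun t _ => hpart t)
      _ = _ := by simp
  rw [Finset.sum_sub_distrib, ← Finset.mul_sum] at htot
  simp only [Finset.sum_const, Nat.card_Icc, Nat.add_sub_cancel, nsmul_eq_mul] at htot
  have hharm := log_add_one_le_harmonic (Nat.sqrt n)
  rw [harmonic_eq_sum_Icc] at hharm
  push_cast at hharm
  have hlog : Real.log n ≤ 2 * Real.log ((Nat.sqrt n : ℝ) + 1) := by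
    have h1 : (n : ℝ) ≤ ((Nat.sqrt n : ℝ) + 1) ^ 2 := by
      have := (Nat.lt_succ_sqrt n).le
      rw [pow_two]
      exact_mod_cast this
    have h2 := Real.log_le_log hn0 h1
    rw [Real.log_pow] at h2
    exact_mod_cast h2
  have hMn' : (Nat.sqrt n : ℝ) ≤ n := by exact_mod_cast hMn
  set S := ∑ j ∈ Finset.Icc 1 (Nat.sqrt n), (j : ℝ)⁻¹ with hS
  have hLS : Real.log n ≤ 2 * S := by linarith
  have h3 : (Nat.sqrt n : ℝ) * (d + μ) ≤ n * (d + μ) :=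
    mul_le_mul_of_nonneg_right hMn' (by linarith)
  have h4 : (n : ℝ) * (μ * S) ≤ n * (w / 2 + (d + μ)) := by linarith
  have h5 := le_of_mul_le_mul_left h4 hn0
  have h6 := mul_le_mul_of_nonneg_left hLS hμ.le
  have h7 : (d + μ) ≤ w * (d + μ) := le_mul_of_one_le_left (by linarith) hw
  rw [ge_iff_le, div_le_iff₀ (by linarith)]
  linarith
end

section
/- Let m ≥ 1 and T be natural numbers, c > 0 and d ≥ 0 reals, s : {1,…,T} → ℝ a sequence of item sizes with 0 < s_t < c for all t, and f : {1,…,T} → {1,…,m} an assignment of items to bins. For t ∈ {1,…,T+1} and bin b, define the level L_t(b) = Σ_{u < t, f(u) = b} s_u. Suppose the assignment satisfies the worst-fit property: for every t and every bin b, L_t(f(t)) ≤ L_t(b). If Σ_{t=1}^{T} s_t ≥ m·(d + c), then every bin's final level L_{T+1}(b) is at least d. -/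
/-- Dual-Worst-Fit guarantee. -/
theorem stmt9 (m T : ℕ) (hm : 1 ≤ m) (c d : ℝ) (hc : 0 < c) (hd : 0 ≤ d)
    (s : ℕ → ℝ) (hs : ∀ t ∈ Finset.Icc 1 T, 0 < s t ∧ s t < c)
    (f : ℕ → ℕ) (hf : ∀ t ∈ Finset.Icc 1 T, f t ∈ Finset.Icc 1 m)
    (L : ℕ → ℕ → ℝ)
    (hL : ∀ t b, L t b = ∑ u ∈ (Finset.Icc 1 T).filter (fun u => u < t ∧ f u = b), s u)
    (hwf : ∀ t ∈ Finset.Icc 1 T, ∀ b ∈ Finset.Icc 1 m, L t (f t) ≤ L t b)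
    (htot : (m : ℝ) * (d + c) ≤ ∑ t ∈ Finset.Icc 1 T, s t) :
    ∀ b ∈ Finset.Icc 1 m, d ≤ L (T + 1) b := by
  have hstep : ∀ t ∈ Finset.Icc 1 T, ∀ b, L (t + 1) b = L t b + if f t = b then s t else 0 := by
    intro t ht b
    rw [hL, hL, Finset.sum_filter, Finset.sum_filter]
    have h1 : (if f t = b then s t else 0)
        = ∑ u ∈ Finset.Icc 1 T, if u = t then (if f u = b then s u else 0) else 0 := by
      rw [Finset.sum_ite_eq' (Finset.Icc 1 T) t (fun u => if f u = b then s u else 0), if_pos ht]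
    rw [h1, ← Finset.sum_add_distrib]
    apply Finset.sum_congr rfl
    intro u _
    rcases lt_trichotomy u t with h | h | h
    · have h2 : u < t + 1 := by omega
      have h3 : u ≠ t := by omega
      simp [h, h2, h3]
    · subst h
      simp
    · have h2 : ¬ u < t + 1 := by omega
      have h3 : u ≠ t := by omega
      have h4 : ¬ u < t := by omega
      simp [h2, h3, h4]
  have hinv : ∀ t, t ≤ T → ∀ a ∈ Finset.Icc 1 m, ∀ b ∈ Finset.Icc 1 m,
      L (t + 1) a ≤ L (t + 1) b + c := by
    intro t
    induction t with
    | zero =>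
      intro _ a _ b _
      have h0 : ∀ b, L (0 + 1) b = 0 := by
        intro b
        rw [hL]
        apply Finset.sum_eq_zero
        intro u hu
        simp only [Finset.mem_filter, Finset.mem_Icc] at hu
        omega
      rw [h0, h0]
      linarith
    | succ t ih =>
      intro ht a ha b hb
      have hm' : t + 1 ∈ Finset.Icc 1 T := by
        rw [Finset.mem_Icc]; omega
      have h1 := ih (by omega) a ha b hb
      have h2 := hwf _ hm' b hb
      have h3 := hs _ hm'
      rw [hstep _ hm', hstep _ hm']
      split_ifs with p q q
      · linarith
      · rw [p] at h2
        linarith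
      · linarith
      · linarith
  intro b hb
  have hsum : ∑ t ∈ Finset.Icc 1 T, s t = ∑ a ∈ Finset.Icc 1 m, L (T + 1) a := by
    rw [← Finset.sum_fiberwise_of_maps_to hf]
    apply Finset.sum_congr rfl
    intro a _
    rw [hL]
    apply Finset.sum_congr _ (fun _ _ => rfl)
    ext u
    simp only [Finset.mem_filter, Finset.mem_Icc]
    constructor
    · rintro ⟨h, h'⟩
      exact ⟨h, by omega, h'⟩
    · rintro ⟨h, _, h'⟩
      exact ⟨h, h'⟩
  have hle := Finset.sum_le_card_nsmul (Finset.Icc 1 m) (fun a => L (T + 1) a) (L (T + 1) b + c)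
    (fun a ha => hinv T le_rfl a ha b hb)
  rw [← hsum, Nat.card_Icc, nsmul_eq_mul, Nat.add_sub_cancel] at hle
  have hmpos : (0 : ℝ) < m := by exact_mod_cast hm
  have := le_of_mul_le_mul_left (htot.trans hle) hmpos
  linarith
end
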